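/- arXiv:1412.0684 — 2 statements merged into one kernel-verified Lean document; each statement's English description precedes it below -/
import Mathlib

section
/- Let T be a finite tree on vertex set V rooted at a vertex r (the input node). Let S ⊆ V be a sensor set satisfying: r ∈ S, and for every vertex v of T, at most one child of v lies outside S (equivalently, S contains all but at most one member of every sibling group). Let w and w' be two weight functions for T (each symmetric, positive exactly on the edges of T, zero otherwise). If [𝓛(w)^k]_{s,r} = [𝓛(w')^k]_{s,r} for every s ∈ S and every natural number k, then w = w'. That is, the map from edge weights to the Markov parameters measured at the sensor nodes of Algorithm 1 is one-to-one. -/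
/-!
Write `x_v(k) = [𝓛(w)^k]_{v,r}`. Since the rows of `𝓛(w)` sum to zero,
`x_v(k+1) = ∑_u w(v,u) (x_u(k) - x_v(k))` (`stateMatrix_pow_succ_apply`). On a tree, `x_v(k)`
vanishes for `k` below the depth of `v` (`stateMatrix_pow_eq_zero`), and its value at the depth of
`v` is the weight of the parent edge times the corresponding value for the parent
(`stateMatrix_pow_dist`), hence positive (`stateMatrix_pow_dist_pos`).

Both the sequence `x_v` and the weight of the edge above `v` are recovered by induction on the
depth of `v`. Let `p` be the parent of `v`, at depth `d`. If `v` is a sensor, `x_v` is given and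
the weight is `x_v(d+1) / x_p(d)` (`weight_eq_of_markov_eq`). If `v` is not a sensor, then all of its
siblings are, so in the recurrence at `p` every term except that of `v` is already determined;
therefore so is `w(p,v) (x_v(k) - x_p(k))` for all `k`. At `k = d` this is `-w(p,v) x_p(d)`, which
yields the weight, and the other values of `k` then yield `x_v`.
-/

open Finset

/-- A weight function for the simple graph `G`: symmetric, positive exactly on
adjacent pairs, zero otherwise (and zero on the diagonal). -/
def IsWeightFn {V : Type*} (G : SimpleGraph V) (w : V → V → ℝ) : Prop :=
  (∀ u v, w u v = w v u) ∧
  (∀ u v, G.Adj u v → 0 < w u v) ∧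
  (∀ u v, u ≠ v → ¬ G.Adj u v → w u v = 0) ∧
  (∀ v, w v v = 0)

/-- The state matrix `𝓛(w)` (the negative of the weighted Laplacian):
`[𝓛(w)]_{u,v} = w(u,v)` for `u ≠ v`, and `[𝓛(w)]_{v,v} = -∑_{u ≠ v} w(v,u)`. -/
def stateMatrix {V : Type*} [Fintype V] [DecidableEq V] (w : V → V → ℝ) :
    Matrix V V ℝ :=
  Matrix.of fun u v => if u = v then -(∑ x ∈ Finset.univ.erase v, w v x) else w u v

section

variable {V : Type*} {G : SimpleGraph V}

lemma parent_unique (hT : G.IsTree) {r c p q : V} (hp : G.Adj c p) (hq : G.Adj c q)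
    (hdp : G.dist c r = G.dist p r + 1) (hdq : G.dist c r = G.dist q r + 1) : p = q := by
  obtain ⟨a, ha⟩ := hT.connected.exists_walk_length_eq_dist p r
  obtain ⟨b, hb⟩ := hT.connected.exists_walk_length_eq_dist q r
  have hpa : (SimpleGraph.Walk.cons hp a).IsPath :=
    SimpleGraph.Walk.isPath_of_length_eq_dist _ (by simp [ha, hdp])
  have hpb : (SimpleGraph.Walk.cons hq b).IsPath :=
    SimpleGraph.Walk.isPath_of_length_eq_dist _ (by simp [hb, hdq])
  have h := (hT.existsUnique_path c r).unique hpa hpb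
  simpa using congrArg SimpleGraph.Walk.snd h

lemma exists_parent (hT : G.IsTree) {r v : V} {n : ℕ} (hn : G.dist v r = n + 1) :
    ∃ p, G.Adj v p ∧ G.dist p r = n := by
  obtain ⟨a, ha⟩ := hT.connected.exists_walk_length_eq_dist v r
  cases a with
  | nil => simp at hn
  | @cons _ p _ hp a =>
    refine ⟨p, hp, ?_⟩
    have h1 := SimpleGraph.dist_le a
    have h2 := hT.dist_eq_dist_add_one_of_adj r hp
    rw [SimpleGraph.dist_comm (v := v), SimpleGraph.dist_comm (v := p)] at h2
    simp only [SimpleGraph.Walk.length_cons] at ha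
    omega

lemma depth_adj (hT : G.IsTree) (r : V) {u v : V} (h : G.Adj u v) :
    G.dist u r = G.dist v r + 1 ∨ G.dist v r = G.dist u r + 1 := by
  rw [SimpleGraph.dist_comm (u := u), SimpleGraph.dist_comm (u := v)]
  exact hT.dist_eq_dist_add_one_of_adj r h

lemma IsWeightFn.eq_zero {w : V → V → ℝ} (hw : IsWeightFn G w) {u v : V} (h : ¬ G.Adj u v) :
    w u v = 0 := by
  by_cases huv : u = v
  · subst huv; exact hw.2.2.2 u
  · exact hw.2.2.1 u v huv h

variable [Fintype V] [DecidableEq V]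

/-- The Markov parameters satisfy the discrete diffusion recurrence. -/
lemma stateMatrix_pow_succ_apply (w : V → V → ℝ) (k : ℕ) (v r : V) :
    (stateMatrix w ^ (k + 1)) v r =
      ∑ u, w v u * ((stateMatrix w ^ k) u r - (stateMatrix w ^ k) v r) := by
  rw [pow_succ', Matrix.mul_apply, ← Finset.add_sum_erase _ _ (Finset.mem_univ v),
    ← Finset.add_sum_erase (f := fun u => w v u * _) _ (Finset.mem_univ v)]
  simp only [stateMatrix, Matrix.of_apply, if_true, sub_self, mul_zero, zero_add, mul_sub,
    Finset.sum_sub_distrib, ← Finset.sum_mul]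
  rw [neg_mul, neg_add_eq_sub]
  congr 1
  refine Finset.sum_congr rfl fun u hu => ?_
  rw [if_neg (Finset.ne_of_mem_erase hu).symm]

lemma stateMatrix_pow_eq_zero (hT : G.IsTree) {w : V → V → ℝ} (hw : IsWeightFn G w) (r : V)
    (k : ℕ) : ∀ v, k < G.dist v r → (stateMatrix w ^ k) v r = 0 := by
  induction k with
  | zero =>
    intro v hv
    have : v ≠ r := by rintro rfl; simp at hv
    simp [this]
  | succ k ih =>
    intro v hv
    rw [stateMatrix_pow_succ_apply]
    refine Finset.sum_eq_zero fun u _ => ?_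
    by_cases huv : G.Adj v u
    · have := depth_adj hT r huv
      rw [ih u (by omega), ih v (by omega), sub_self, mul_zero]
    · rw [hw.eq_zero huv, zero_mul]

/-- The first possibly nonzero Markov parameter of a child `c` is that of its parent `p` times the
weight of the edge joining them. -/
lemma stateMatrix_pow_dist (hT : G.IsTree) {w : V → V → ℝ} (hw : IsWeightFn G w) {r c p : V}
    (hcp : G.Adj c p) (hd : G.dist c r = G.dist p r + 1) :
    (stateMatrix w ^ (G.dist p r + 1)) c r = w c p * (stateMatrix w ^ G.dist p r) p r := by
  rw [stateMatrix_pow_succ_apply, Finset.sum_eq_single p]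
  · rw [stateMatrix_pow_eq_zero hT hw r _ c (by omega), sub_zero]
  · intro u _ hup
    by_cases huc : G.Adj c u
    · -- `p` is the only parent of `c`, so `u` is deeper than `c`.
      have hu : G.dist u r = G.dist c r + 1 := by
        rcases depth_adj hT r huc with h | h
        · exact absurd (parent_unique hT huc hcp h hd) hup
        · exact h
      rw [stateMatrix_pow_eq_zero hT hw r _ c (by omega),
        stateMatrix_pow_eq_zero hT hw r _ u (by omega), sub_zero, mul_zero]
    · rw [hw.eq_zero huc, zero_mul]
  · simp

lemma stateMatrix_pow_dist_pos (hT : G.IsTree) {w : V → V → ℝ} (hw : IsWeightFn G w) (r : V)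
    (n : ℕ) : ∀ v, G.dist v r = n → 0 < (stateMatrix w ^ n) v r := by
  induction n with
  | zero =>
    intro v hv
    rw [hT.connected.dist_eq_zero_iff] at hv
    simp [hv]
  | succ n ih =>
    intro v hv
    obtain ⟨p, hvp, hp⟩ := exists_parent hT hv
    have h := stateMatrix_pow_dist (r := r) hT hw hvp (by omega)
    rw [hp] at h
    rw [h]
    exact mul_pos (hw.2.1 _ _ hvp) (ih p hp)

/-- The Markov parameters of a vertex and of its parent determine the weight of the edge joining
them. -/
lemma weight_eq_of_markov_eq (hT : G.IsTree) {w w' : V → V → ℝ} (hw : IsWeightFn G w)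
    (hw' : IsWeightFn G w') {r c p : V} (hcp : G.Adj c p) (hd : G.dist c r = G.dist p r + 1)
    (hc : ∀ k, (stateMatrix w ^ k) c r = (stateMatrix w' ^ k) c r)
    (hp : ∀ k, (stateMatrix w ^ k) p r = (stateMatrix w' ^ k) p r) : w c p = w' c p := by
  have h := hc (G.dist p r + 1)
  rw [stateMatrix_pow_dist hT hw hcp hd, stateMatrix_pow_dist hT hw' hcp hd, ← hp] at h
  exact mul_right_cancel₀ (stateMatrix_pow_dist_pos hT hw r _ p rfl).ne' h

/-- If `w` and `w'` have the same Markov parameters at the sensors, they have the same Markov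
parameters everywhere. -/
lemma markov_eq (hT : G.IsTree) (r : V) (S : Set V) (hrS : r ∈ S)
    (hS : ∀ v c₁ c₂ : V,
      G.Adj v c₁ → G.dist c₁ r = G.dist v r + 1 →
      G.Adj v c₂ → G.dist c₂ r = G.dist v r + 1 →
      c₁ ∉ S → c₂ ∉ S → c₁ = c₂)
    {w w' : V → V → ℝ} (hw : IsWeightFn G w) (hw' : IsWeightFn G w')
    (h : ∀ s ∈ S, ∀ k : ℕ, (stateMatrix w ^ k) s r = (stateMatrix w' ^ k) s r) (n : ℕ) :
    ∀ v, G.dist v r = n → ∀ k, (stateMatrix w ^ k) v r = (stateMatrix w' ^ k) v r := by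
  induction n using Nat.strong_induction_on with
  | _ n ih =>
  intro v hv
  by_cases hvS : v ∈ S
  · exact h v hvS
  obtain _ | n := n
  · rw [hT.connected.dist_eq_zero_iff] at hv
    exact absurd (hv ▸ hrS) hvS
  obtain ⟨p, hvp, hp⟩ := exists_parent hT hv
  have hxp := ih n (by omega) p hp
  -- Every term of the recurrence at `p` other than that of `v` is the same for `w` and `w'`.
  have hother : ∀ u, u ≠ v → ∀ k,
      w p u * ((stateMatrix w ^ k) u r - (stateMatrix w ^ k) p r) =
        w' p u * ((stateMatrix w' ^ k) u r - (stateMatrix w' ^ k) p r) := by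
    intro u huv k
    by_cases hpu : G.Adj p u
    · rcases depth_adj hT r hpu with hd | hd
      · have hxu := ih (G.dist u r) (by omega) u rfl
        rw [weight_eq_of_markov_eq hT hw hw' hpu hd hxp hxu, hxu, hxp]
      · have huS : u ∈ S := by
          by_contra huS
          exact huv (hS p u v hpu hd hvp.symm (by omega) huS hvS)
        rw [hw.1 p u, hw'.1 p u,
          weight_eq_of_markov_eq hT hw hw' hpu.symm hd (h u huS) hxp, h u huS, hxp]
    · rw [hw.eq_zero hpu, hw'.eq_zero hpu, zero_mul, zero_mul]
  have hterm : ∀ k, w p v * ((stateMatrix w ^ k) v r - (stateMatrix w ^ k) p r) =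
      w' p v * ((stateMatrix w' ^ k) v r - (stateMatrix w ^ k) p r) := by
    intro k
    have hk := hxp (k + 1)
    rw [stateMatrix_pow_succ_apply, stateMatrix_pow_succ_apply,
      ← Finset.add_sum_erase _ _ (Finset.mem_univ v),
      ← Finset.add_sum_erase (f := fun u => w' p u * _) _ (Finset.mem_univ v),
      Finset.sum_congr rfl fun u hu => hother u (Finset.ne_of_mem_erase hu) k] at hk
    rw [hxp k] at hk ⊢
    exact add_right_cancel hk
  -- At time `n` the signal has reached `p` but not yet `v`, so the equation isolates the weight.
  have hweight : w p v = w' p v := by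
    have hn := hterm n
    rw [stateMatrix_pow_eq_zero hT hw r n v (by omega),
      stateMatrix_pow_eq_zero hT hw' r n v (by omega)] at hn
    refine mul_right_cancel₀ ?_ hn
    have := stateMatrix_pow_dist_pos hT hw r n p hp
    linarith
  intro k
  have hk := hterm k
  rw [← hweight] at hk
  linarith [mul_left_cancel₀ (hw.2.1 p v hvp.symm).ne' hk]

end

theorem sensor_placement_identifiability
    {V : Type*} [Fintype V] [DecidableEq V] (G : SimpleGraph V)
    (hT : G.IsTree) (r : V) (S : Set V) (hrS : r ∈ S)
    (hS : ∀ v c₁ c₂ : V,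
      G.Adj v c₁ → G.dist c₁ r = G.dist v r + 1 →
      G.Adj v c₂ → G.dist c₂ r = G.dist v r + 1 →
      c₁ ∉ S → c₂ ∉ S → c₁ = c₂)
    (w w' : V → V → ℝ) (hw : IsWeightFn G w) (hw' : IsWeightFn G w')
    (h : ∀ s ∈ S, ∀ k : ℕ, (stateMatrix w ^ k) s r = (stateMatrix w' ^ k) s r) :
    w = w' := by
  have hx : ∀ v k, (stateMatrix w ^ k) v r = (stateMatrix w' ^ k) v r := fun v =>
    markov_eq hT r S hrS hS hw hw' h _ v rfl
  funext u v
  by_cases huv : G.Adj u v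
  · rcases depth_adj hT r huv with hd | hd
    · exact weight_eq_of_markov_eq hT hw hw' huv hd (hx u) (hx v)
    · rw [hw.1 u v, hw'.1 u v]
      exact weight_eq_of_markov_eq hT hw hw' huv.symm hd (hx v) (hx u)
  · rw [hw.eq_zero huv, hw'.eq_zero huv]
end

section
/- Let T be the star graph on n ≥ 4 vertices with center c (the input node). For every sensor set S ⊆ V with |S| ≤ n − 3, the edge weights are not identifiable: there exist two distinct weight functions w ≠ w' for T (both symmetric and positive on the edges of T) such that [𝓛(w)^k]_{s,c} = [𝓛(w')^k]_{s,c} for every s ∈ S and every natural number k. -/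
/-!
At least three vertices carry no sensor, so some two of them, `a` and `b`, are leaves. Give the
edges at `a` and `b` different weights. The transposition of `a` and `b` is an automorphism of the
star; transporting the weights along it yields a different weight function, whose state matrix is
the original one with rows and columns permuted. The same holds for all powers
(`stateMatrix_comp_perm`, `submatrix_perm_pow`), and since the transposition fixes the center and
every sensor, the entries `(s, c)` do not change.
-/

open Finset

/-- The weights on the star with center `c` that put weight `f x` on the edge from `c` to the
leaf `x`; the value `f c` is not used. -/
def starWeight {V : Type*} [DecidableEq V] (c : V) (f : V → ℝ) (u v : V) : ℝ :=
  if u = v then 0 else if u = c then f v else if v = c then f u else 0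

theorem isWeightFn_starWeight {V : Type*} [DecidableEq V] (G : SimpleGraph V) (c : V)
    (hstar : ∀ a b : V, G.Adj a b ↔ (a = c ∧ b ≠ c) ∨ (b = c ∧ a ≠ c))
    (f : V → ℝ) (hf : ∀ x, 0 < f x) : IsWeightFn G (starWeight c f) := by
  refine ⟨fun u v => ?_, fun u v h => ?_, fun u v huv h => ?_, fun v => ?_⟩
  · unfold starWeight
    grind
  · rw [hstar] at h
    unfold starWeight
    grind
  · rw [hstar] at h
    unfold starWeight
    grind
  · simp [starWeight]

theorem IsWeightFn.comp_perm {V : Type*} {G : SimpleGraph V} {w : V → V → ℝ}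
    (hw : IsWeightFn G w) (σ : Equiv.Perm V) (hσ : ∀ u v, G.Adj (σ u) (σ v) ↔ G.Adj u v) :
    IsWeightFn G fun u v => w (σ u) (σ v) :=
  ⟨fun _ _ => hw.1 _ _, fun u v h => hw.2.1 _ _ ((hσ u v).2 h),
    fun u v huv h => hw.2.2.1 _ _ (σ.injective.ne huv) fun h' => h ((hσ u v).1 h'),
    fun _ => hw.2.2.2 _⟩

theorem stateMatrix_comp_perm {V : Type*} [Fintype V] [DecidableEq V] (w : V → V → ℝ)
    (σ : Equiv.Perm V) :
    stateMatrix (fun u v => w (σ u) (σ v)) = (stateMatrix w).submatrix σ σ := by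
  ext u v
  simp only [stateMatrix, Matrix.of_apply, Matrix.submatrix_apply, σ.injective.eq_iff]
  split_ifs
  · congr 1
    exact Finset.sum_equiv σ (by simp) (by simp)
  · rfl

theorem submatrix_perm_pow {V : Type*} [Fintype V] [DecidableEq V] (M : Matrix V V ℝ)
    (σ : Equiv.Perm V) (k : ℕ) : M.submatrix σ σ ^ k = (M ^ k).submatrix σ σ := by
  induction k with
  | zero => simp
  | succ k ih => rw [pow_succ, pow_succ, ih, Matrix.submatrix_mul_equiv]

theorem star_not_identifiable_with_few_sensors
    {V : Type*} [Fintype V] [DecidableEq V] (G : SimpleGraph V) (c : V)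
    (hstar : ∀ a b : V, G.Adj a b ↔ (a = c ∧ b ≠ c) ∨ (b = c ∧ a ≠ c))
    (hn : 4 ≤ Fintype.card V)
    (S : Finset V) (hS : S.card ≤ Fintype.card V - 3) :
    ∃ w w' : V → V → ℝ, IsWeightFn G w ∧ IsWeightFn G w' ∧ w ≠ w' ∧
      ∀ s ∈ S, ∀ k : ℕ, (stateMatrix w ^ k) s c = (stateMatrix w' ^ k) s c := by
  classical
  obtain ⟨a, ha, b, hb, hab⟩ : ∃ a ∈ (Sᶜ).erase c, ∃ b ∈ (Sᶜ).erase c, a ≠ b := by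
    apply Finset.one_lt_card.mp
    have h1 := Finset.pred_card_le_card_erase (s := Sᶜ) (a := c)
    rw [Finset.card_compl] at h1
    omega
  simp only [Finset.mem_erase, Finset.mem_compl] at ha hb
  have hσc : Equiv.swap a b c = c := Equiv.swap_apply_of_ne_of_ne ha.1.symm hb.1.symm
  have hw : IsWeightFn G (starWeight c fun x => if x = a then 2 else 1) :=
    isWeightFn_starWeight G c hstar _ fun x => by split_ifs <;> norm_num
  refine ⟨_, _, hw, hw.comp_perm (Equiv.swap a b) fun u v => ?_, fun h => ?_, fun s hs k => ?_⟩
  · have hc : ∀ x, Equiv.swap a b x = c ↔ x = c := fun x => by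
      rw [← Equiv.apply_eq_iff_eq (Equiv.swap a b) (x := x), hσc]
    simp only [hstar, ne_eq, hc]
  · have h1 := congrFun (congrFun h c) a
    simp only [hσc, Equiv.swap_apply_left] at h1
    simp [starWeight, ha.1.symm, hb.1.symm, hab.symm] at h1
  · have hsσ : Equiv.swap a b s = s :=
      Equiv.swap_apply_of_ne_of_ne (fun h => ha.2 (h ▸ hs)) (fun h => hb.2 (h ▸ hs))
    rw [stateMatrix_comp_perm, submatrix_perm_pow, Matrix.submatrix_apply, hsσ, hσc]
end
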